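/- arXiv:2310.00292 — 2 statements merged into one kernel-verified Lean document; each statement's English description precedes it below -/
import Mathlib

section
/- Let n ≥ 2, let μ = f·Lⁿ ∈ 𝒲(ℝⁿ) be a PS measure, let E ⊆ ℝⁿ be a Lebesgue-measurable set, and let v ∈ S^{n−1}. Then for every η ∈ S^{n−1} with v·η > 0, μ(S_η(E) ∖ H_μ(E, v)) ≤ μ(E ∖ H_μ(E, v)). -/
/-!
The inequality already holds on each line parallel to `η`, and Tonelli's theorem sums it up. As
`v·η > 0`, the half-space `H = H_μ(E, v)` meets such a line in an upper set, and so does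
`S = S_η(E)`; hence on the line one of the two contains the other. If `S ⊆ H`, there is nothing to
show. If `H ⊆ S`, then `ν(S ∖ H) = ν(S) - ν(H) ≤ ν(E) - ν(H) ≤ ν(E ∖ H)`, where `ν` is the measure
on the line. The subtraction needs `ν(H) < ∞`, which holds on almost every line because
`μ(H) ≤ μ(E)`; and if `μ(E) = ∞`, then `H` is the whole space.
-/

open MeasureTheory Set Filter
open scoped ENNReal RealInnerProductSpace Topology

noncomputable section

/-- Euclidean space ℝⁿ. -/
abbrev En (n : ℕ) := EuclideanSpace ℝ (Fin n)

/-- Divergence of a vector field on ℝⁿ. -/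
noncomputable def dvg {n : ℕ} (φ : En n → En n) (x : En n) : ℝ :=
  ∑ i : Fin n, fderiv ℝ φ x (EuclideanSpace.single i 1) i

/-- `f'` is the (weak) gradient of `f`, and both are locally integrable;
this encodes `f ∈ W^{1,1}_loc(ℝⁿ)` with weak gradient `∇f = f'`. -/
def HasWeakGrad {n : ℕ} (f : En n → ℝ) (f' : En n → En n) : Prop :=
  LocallyIntegrable f volume ∧ LocallyIntegrable f' volume ∧
    ∀ φ : En n → En n, ContDiff ℝ 1 φ → HasCompactSupport φ →
      (∫ x, f x * dvg φ x) = - ∫ x, ⟪φ x, f' x⟫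

/-- Membership of `μ = f·Lⁿ` in the class `𝒲(ℝⁿ)`: the density `f` is non-negative,
integrable and lies in `W^{1,1}_loc(ℝⁿ)` with weak gradient `f'`. -/
def MemW {n : ℕ} (f : En n → ℝ) (f' : En n → En n) : Prop :=
  (∀ x, 0 ≤ f x) ∧ Integrable f volume ∧ HasWeakGrad f f'

/-- Admissible test vector fields: `C¹`, compactly supported in `U`, sup-norm at most 1. -/
def IsTestField {n : ℕ} (U : Set (En n)) (φ : En n → En n) : Prop :=
  ContDiff ℝ 1 φ ∧ HasCompactSupport φ ∧ tsupport φ ⊆ U ∧ ∀ x, ‖φ x‖ ≤ 1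

/-- The weighted variation `‖g‖_{BV_μ(U)}` (valued in `ℝ≥0∞`;
membership in `BV_μ(U)` means that this quantity is finite). -/
noncomputable def bvVar {n : ℕ} (f : En n → ℝ) (f' : En n → En n) (U : Set (En n))
    (g : En n → ℝ) : ℝ≥0∞ :=
  ⨆ (φ : En n → En n) (_ : IsTestField U φ),
    ENNReal.ofReal (∫ x in U, g x * (f x * dvg φ x + ⟪φ x, f' x⟫))

/-- The weighted perimeter `Per_μ(E; U)`. -/
noncomputable def perim {n : ℕ} (f : En n → ℝ) (f' : En n → En n) (U : Set (En n))
    (E : Set (En n)) : ℝ≥0∞ :=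
  bvVar f f' U (E.indicator fun _ => (1 : ℝ))

/-- The measure `μ = f·Lⁿ`. -/
noncomputable def muM {n : ℕ} (f : En n → ℝ) : Measure (En n) :=
  volume.withDensity fun x => ENNReal.ofReal (f x)

/-- One-dimensional generalized Ehrhard symmetrization of `A ⊆ ℝ` in direction `v ∈ {−1,+1}`
with respect to a measure `ν` on `ℝ`: the largest half-line `{t : v·t ≥ c}` of `ν`-measure
`ν A` (with the conventions `∅`, `ℝ` when `c = ±∞`). -/
def ehrhard1D (ν : Measure ℝ) (v : ℝ) (A : Set ℝ) : Set ℝ :=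
  {t | ∀ b : ℝ, (∀ c : ℝ, ν {y | c ≤ v * y} ≤ ν A → b ≤ c) → b ≤ v * t}

/-- The weighted measure `f·H¹` on the fiber `{x + t·v : t ∈ ℝ}`, identified with `ℝ`. -/
noncomputable def fiberMeasure {n : ℕ} (f : En n → ℝ) (x v : En n) : Measure ℝ :=
  (volume : Measure ℝ).withDensity fun t => ENNReal.ofReal (f (x + t • v))

/-- Generalized `v`-Ehrhard symmetrization of `E ⊆ ℝⁿ` with respect to `μ = f·Lⁿ`:
on each fiber over `v^⊥` one replaces `E` by the largest half-line in direction `v`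
of the same weighted measure. -/
def ehrhardSymm {n : ℕ} (f : En n → ℝ) (v : En n) (E : Set (En n)) : Set (En n) :=
  {z | ⟪z, v⟫ ∈
      ehrhard1D (fiberMeasure f (z - ⟪z, v⟫ • v) v) 1
        {t | (z - ⟪z, v⟫ • v) + t • v ∈ E}}

/-- `μ = f·Lⁿ` is a perimeter symmetrization (PS) measure: generalized Ehrhard
symmetrization does not increase the weighted perimeter of sets of finite `μ`-perimeter. -/
def IsPSMeasure {n : ℕ} (f : En n → ℝ) (f' : En n → En n) : Prop :=
  ∀ v : En n, ‖v‖ = 1 → ∀ E : Set (En n), NullMeasurableSet E volume →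
    perim f f' univ E < ⊤ →
      perim f f' univ (ehrhardSymm f v E) ≤ perim f f' univ E

/-- The half-space `H(v, r) = {x : x·v ≥ r}`. -/
def halfSpace {n : ℕ} (v : En n) (r : ℝ) : Set (En n) := {x | r ≤ ⟪x, v⟫}

/-- `H_μ(E, v)`: the largest half-space in direction `v` with `μ`-measure `μ(E)`. -/
def halfSpaceOf {n : ℕ} (f : En n → ℝ) (E : Set (En n)) (v : En n) : Set (En n) :=
  {x | ∀ b : ℝ, (∀ c : ℝ, muM f (halfSpace v c) ≤ muM f E → b ≤ c) → b ≤ ⟪x, v⟫}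

/-- `g'` is the weak derivative of `g : ℝ → ℝ` (so `g ∈ W^{1,1}_loc(ℝ)`). -/
def HasWeakDeriv (g g' : ℝ → ℝ) : Prop :=
  LocallyIntegrable g volume ∧ LocallyIntegrable g' volume ∧
    ∀ φ : ℝ → ℝ, ContDiff ℝ 1 φ → HasCompactSupport φ →
      (∫ t, g t * deriv φ t) = - ∫ t, φ t * g' t

section MaxRay

/-- The largest half-line `[c, ∞)` whose `ν`-measure is at most `m`, with the conventions `∅` and
`ℝ` for `c = ±∞`. Both `S_η(E)` on a line and `H_μ(E, v)` in the coordinate `x·v` are of this form;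
only their measure `m` matters, not the set that is symmetrized. -/
def maxRay (ν : Measure ℝ) (m : ℝ≥0∞) : Set ℝ :=
  upperBounds (lowerBounds {c | ν (Ici c) ≤ m})

variable {ν : Measure ℝ} {m : ℝ≥0∞}

lemma mem_maxRay_iff {t : ℝ} : t ∈ maxRay ν m ↔ ∀ q : ℚ, t < q → ν (Ici (q : ℝ)) ≤ m := by
  constructor
  · intro ht q htq
    by_contra hq
    refine htq.not_ge (ht fun c (hc : ν (Ici c) ≤ m) => ?_)
    by_contra hcq
    exact hq ((measure_mono (Ici_subset_Ici.2 (not_le.1 hcq).le)).trans hc)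
  · intro h b hb
    by_contra htb
    obtain ⟨q, htq, hqb⟩ := exists_rat_btwn (not_le.1 htb)
    exact (hb (h q htq)).not_gt hqb

lemma isUpperSet_maxRay : IsUpperSet (maxRay ν m) :=
  fun _ _ hst hs => upperBounds_mono_mem hst hs

lemma measurableSet_maxRay : MeasurableSet (maxRay ν m) :=
  isUpperSet_maxRay.ordConnected.measurableSet

lemma nullMeasurableSet_prod_maxRay {α : Type*} [MeasurableSpace α] {μ : Measure α}
    {ρ : Measure ℝ} {κ : α → Measure ℝ} {m : α → ℝ≥0∞}
    (hκ : ∀ c : ℝ, AEMeasurable (fun x => κ x (Ici c)) μ) (hm : AEMeasurable m μ) :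
    NullMeasurableSet {p : α × ℝ | p.2 ∈ maxRay (κ p.1) (m p.1)} (μ.prod ρ) := by
  have hInter : {p : α × ℝ | p.2 ∈ maxRay (κ p.1) (m p.1)} =
      ⋂ q : ℚ, {p | (q : ℝ) ≤ p.2} ∪ {p | κ p.1 (Ici (q : ℝ)) ≤ m p.1} := by
    ext p
    simp only [mem_ofPred_eq, mem_maxRay_iff, mem_iInter, mem_union, imp_iff_not_or, not_lt]
  rw [hInter]
  refine .iInter fun q => .union ?_ (nullMeasurableSet_le (hκ q).comp_fst hm.comp_fst)
  exact (measurableSet_le measurable_const measurable_snd).nullMeasurableSet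

lemma maxRay_top : maxRay ν ⊤ = univ :=
  eq_univ_of_forall fun _ => mem_maxRay_iff.2 fun _ _ => le_top

/-- A half-line of measure exactly `m` need not exist, but the left endpoint is not an atom and the
rest of the ray is an increasing union of half-lines of measure at most `m`. -/
lemma measure_maxRay_le [NullSingletonClass ν] : ν (maxRay ν m) ≤ m := by
  set S := maxRay ν m
  let Q : Set ℚ := {q | ∃ s ∈ S, s < q}
  have hcover : S ⊆ (⋃ q : Q, Ici ((q : ℚ) : ℝ)) ∪ {sInf S} := by
    intro t ht
    by_cases h : ∃ s ∈ S, s < t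
    · obtain ⟨s, hs, hst⟩ := h
      obtain ⟨q, hsq, hqt⟩ := exists_rat_btwn hst
      exact Or.inl (mem_iUnion.2 ⟨⟨q, s, hs, hsq⟩, hqt.le⟩)
    · push Not at h
      exact Or.inr (IsLeast.csInf_eq ⟨ht, h⟩).symm
  have hanti : Antitone fun q : Q => Ici ((q : ℚ) : ℝ) :=
    fun _ _ hab => Ici_subset_Ici.2 (Rat.cast_le.2 hab)
  calc ν S ≤ ν (⋃ q : Q, Ici ((q : ℚ) : ℝ)) + ν {sInf S} :=
        (measure_mono hcover).trans (measure_union_le _ _)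
    _ = ⨆ q : Q, ν (Ici ((q : ℚ) : ℝ)) := by
        rw [measure_singleton, add_zero, hanti.measure_iUnion]
    _ ≤ m := iSup_le fun ⟨q, _, hs, hsq⟩ => mem_maxRay_iff.1 hs q hsq

lemma measure_maxRay_sdiff_le [NullSingletonClass ν] (A : Set ℝ) {U : Set ℝ} (hU : IsUpperSet U)
    (hfin : ν U ≠ ⊤) : ν (maxRay ν (ν A) \ U) ≤ ν (A \ U) := by
  have hUm : MeasurableSet U := hU.ordConnected.measurableSet
  have hS : IsUpperSet (maxRay ν (ν A)) := isUpperSet_maxRay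
  rcases hS.total hU with hSU | hUS
  · simp [sdiff_eq_empty.2 hSU]
  · calc ν (maxRay ν (ν A) \ U) = ν (maxRay ν (ν A)) - ν U :=
          measure_sdiff hUS hUm.nullMeasurableSet hfin
      _ ≤ ν A - ν U := tsub_le_tsub_right measure_maxRay_le _
      _ ≤ ν (A \ U) := le_measure_sdiff

end MaxRay

section HalfSpace

lemma nullSingletonClass_map_inner {V : Type*} [NormedAddCommGroup V] [InnerProductSpace ℝ V]
    [FiniteDimensional ℝ V] [MeasurableSpace V] [BorelSpace V] {μ : Measure V} (hμ : μ ≪ volume)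
    {v : V} (hv : v ≠ 0) : NullSingletonClass (μ.map fun x => ⟪x, v⟫) where
  measure_singleton t := by
    have hsurj : Function.Surjective ((innerₗ V).flip v) :=
      LinearMap.surjective fun h => hv (inner_self_eq_zero.1 (LinearMap.congr_fun h v))
    have hne : ∀ᵐ x : V, ⟪x, v⟫ ∈ ({t} : Set ℝ)ᶜ :=
      (ae_comp_linearMap_mem_iff _ volume volume hsurj (measurableSet_singleton t).compl).2
        (measure_eq_zero_iff_ae_notMem.1 (measure_singleton t))
    rw [Measure.map_apply (by fun_prop) (measurableSet_singleton t)]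
    exact measure_eq_zero_iff_ae_notMem.2 (hμ.ae_le hne)

variable {n : ℕ} {f : En n → ℝ} {E : Set (En n)} {v : En n}

lemma halfSpaceOf_eq_preimage_maxRay : halfSpaceOf f E v =
    (fun x => ⟪x, v⟫) ⁻¹' maxRay ((muM f).map fun x => ⟪x, v⟫) (muM f E) := by
  have hmap (c : ℝ) : (muM f).map (fun x => ⟪x, v⟫) (Ici c) = muM f (halfSpace v c) :=
    Measure.map_apply (by fun_prop) measurableSet_Ici
  simp only [maxRay, hmap]
  rfl

lemma measurableSet_halfSpaceOf : MeasurableSet (halfSpaceOf f E v) := by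
  rw [halfSpaceOf_eq_preimage_maxRay]
  exact measurableSet_maxRay.preimage (by fun_prop)

lemma halfSpaceOf_eq_univ (hE : muM f E = ⊤) : halfSpaceOf f E v = univ := by
  rw [halfSpaceOf_eq_preimage_maxRay, hE, maxRay_top, preimage_univ]

lemma muM_halfSpaceOf_le (hv : v ≠ 0) : muM f (halfSpaceOf f E v) ≤ muM f E := by
  have : NullSingletonClass ((muM f).map fun x => ⟪x, v⟫) :=
    nullSingletonClass_map_inner (withDensity_absolutelyContinuous _ _) hv
  rw [halfSpaceOf_eq_preimage_maxRay, ← Measure.map_apply (by fun_prop) measurableSet_maxRay]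
  exact measure_maxRay_le

end HalfSpace

section OrthogonalLines

variable {V : Type*} [NormedAddCommGroup V] [InnerProductSpace ℝ V]

/-- The trace `E_x = {t | x + t η ∈ E}` of a set on the line through `x` in direction `η`. -/
def fiber (η : V) (E : Set V) (x : V) : Set ℝ := {t | x + t • η ∈ E}

lemma inner_orthogonal_add_smul {η : V} (hη : ‖η‖ = 1) (x : (ℝ ∙ η)ᗮ) (t : ℝ) :
    ⟪(x : V) + t • η, η⟫ = t := by
  rw [inner_add_left, Submodule.mem_orthogonal_singleton_iff_inner_left.1 x.2,
    real_inner_smul_left, real_inner_self_eq_norm_sq, hη]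
  ring

variable [FiniteDimensional ℝ V] [MeasurableSpace V] [BorelSpace V] {η : V}

/-- The coordinates `x + t η`, `x ∈ η^⊥`, of the space, for a unit vector `η`. -/
def orthogonalLineEquiv (hη : ‖η‖ = 1) : (ℝ ∙ η)ᗮ × ℝ ≃ᵐ V :=
  MeasurableEquiv.prodComm.trans <|
    ((LinearIsometryEquiv.toSpanUnitSingleton η hη).toMeasurableEquiv.prodCongr
      (MeasurableEquiv.refl _)).trans <|
    (MeasurableEquiv.toLp 2 _).trans (ℝ ∙ η).orthogonalDecomposition.symm.toMeasurableEquiv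

lemma orthogonalLineEquiv_apply (hη : ‖η‖ = 1) (p : (ℝ ∙ η)ᗮ × ℝ) :
    orthogonalLineEquiv hη p = p.1 + p.2 • η := by
  rw [add_comm]; rfl

lemma measurePreserving_orthogonalLineEquiv (hη : ‖η‖ = 1) :
    MeasurePreserving (orthogonalLineEquiv hη) :=
  Measure.measurePreserving_swap.trans <|
    ((LinearIsometryEquiv.toSpanUnitSingleton η hη).measurePreserving.prod
      (MeasurePreserving.id volume)).trans <|
    (WithLp.volume_preserving_toLp _ _).trans
      (ℝ ∙ η).orthogonalDecomposition.symm.measurePreserving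

lemma ae_nullMeasurableSet_fiber (hη : ‖η‖ = 1) {B : Set V} (hB : NullMeasurableSet B) :
    ∀ᵐ x : (ℝ ∙ η)ᗮ, NullMeasurableSet (fiber η B x) := by
  obtain ⟨C, hC, hBC⟩ :=
    hB.preimage (measurePreserving_orthogonalLineEquiv hη).quasiMeasurePreserving
  filter_upwards [Measure.ae_ae_of_ae_prod hBC.mem_iff] with x hx
  refine ⟨Prod.mk x ⁻¹' C, hC.preimage (by fun_prop), eventuallyEq_set.2 ?_⟩
  filter_upwards [hx] with t ht
  rwa [mem_preimage, orthogonalLineEquiv_apply] at ht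

end OrthogonalLines

section FiberMeasure

variable {n : ℕ} {f : En n → ℝ} {η : En n} {B : Set (En n)}

lemma aemeasurable_indicator_orthogonalLineEquiv (hη : ‖η‖ = 1) (hf : AEMeasurable f)
    (hB : NullMeasurableSet B) :
    AEMeasurable (fun p : (ℝ ∙ η)ᗮ × ℝ =>
      B.indicator (fun y => ENNReal.ofReal (f y)) (p.1 + p.2 • η)) := by
  simp only [← orthogonalLineEquiv_apply hη]
  exact AEMeasurable.comp_quasiMeasurePreserving (hf.ennreal_ofReal.indicator₀ hB)
    (measurePreserving_orthogonalLineEquiv hη).quasiMeasurePreserving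

lemma ae_fiberMeasure_fiber_eq (hη : ‖η‖ = 1) (hB : NullMeasurableSet B) :
    ∀ᵐ x : (ℝ ∙ η)ᗮ, fiberMeasure f x η (fiber η B x) =
      ∫⁻ t : ℝ, B.indicator (fun y => ENNReal.ofReal (f y)) (x + t • η) := by
  filter_upwards [ae_nullMeasurableSet_fiber hη hB] with x hx
  rw [fiberMeasure, withDensity_apply₀ _ hx, ← lintegral_indicator₀ hx]
  rfl

lemma aemeasurable_fiberMeasure_fiber (hη : ‖η‖ = 1) (hf : AEMeasurable f)
    (hB : NullMeasurableSet B) :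
    AEMeasurable fun x : (ℝ ∙ η)ᗮ => fiberMeasure f x η (fiber η B x) :=
  (aemeasurable_indicator_orthogonalLineEquiv hη hf hB).lintegral_prod_right'.congr
    ((ae_fiberMeasure_fiber_eq hη hB).mono fun _ => Eq.symm)

theorem muM_eq_lintegral_fiberMeasure (hη : ‖η‖ = 1) (hf : AEMeasurable f)
    (hB : NullMeasurableSet B) :
    muM f B = ∫⁻ x : (ℝ ∙ η)ᗮ, fiberMeasure f x η (fiber η B x) := by
  rw [muM, withDensity_apply₀ _ hB, ← lintegral_indicator₀ hB,
    (measurePreserving_orthogonalLineEquiv hη).lintegral_map_equiv]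
  simp only [orthogonalLineEquiv_apply]
  rw [Measure.volume_eq_prod,
    lintegral_prod _ (aemeasurable_indicator_orthogonalLineEquiv hη hf hB)]
  exact lintegral_congr_ae ((ae_fiberMeasure_fiber_eq hη hB).mono fun _ => Eq.symm)

end FiberMeasure

section Symmetrization

variable {n : ℕ} {f : En n → ℝ} {η : En n} {E H : Set (En n)}

lemma fiber_halfSpace (hη : ‖η‖ = 1) (c : ℝ) (x : (ℝ ∙ η)ᗮ) :
    fiber η (halfSpace η c) x = Ici c := by
  ext t
  simp only [fiber, halfSpace, mem_ofPred_eq, inner_orthogonal_add_smul hη, mem_Ici]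

lemma fiber_ehrhardSymm (hη : ‖η‖ = 1) (x : (ℝ ∙ η)ᗮ) :
    fiber η (ehrhardSymm f η E) x =
      maxRay (fiberMeasure f x η) (fiberMeasure f x η (fiber η E x)) := by
  ext t
  simp only [fiber, ehrhardSymm, ehrhard1D, mem_ofPred_eq, inner_orthogonal_add_smul hη,
    add_sub_cancel_right, one_mul]
  rfl

lemma nullMeasurableSet_ehrhardSymm (hη : ‖η‖ = 1) (hf : AEMeasurable f)
    (hE : NullMeasurableSet E) : NullMeasurableSet (ehrhardSymm f η E) := by
  let e := orthogonalLineEquiv hη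
  have he : MeasurePreserving e := measurePreserving_orthogonalLineEquiv hη
  have hIci (c : ℝ) : AEMeasurable fun x : (ℝ ∙ η)ᗮ => fiberMeasure f x η (Ici c) := by
    have hhalf : MeasurableSet (halfSpace η c) := measurableSet_le measurable_const (by fun_prop)
    simpa only [fiber_halfSpace hη] using
      aemeasurable_fiberMeasure_fiber hη hf hhalf.nullMeasurableSet
  have hpre : e ⁻¹' ehrhardSymm f η E = {p | p.2 ∈
      maxRay (fiberMeasure f p.1 η) (fiberMeasure f p.1 η (fiber η E p.1))} := by
    ext p
    rw [mem_preimage, orthogonalLineEquiv_apply, mem_ofPred_eq, ← fiber_ehrhardSymm hη]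
    rfl
  rw [← e.symm_preimage_preimage (ehrhardSymm f η E), hpre]
  exact (nullMeasurableSet_prod_maxRay hIci (aemeasurable_fiberMeasure_fiber hη hf hE)).preimage
    (he.symm e).quasiMeasurePreserving

theorem muM_ehrhardSymm_sdiff_le (hη : ‖η‖ = 1) (hf : AEMeasurable f) (hE : NullMeasurableSet E)
    (hH : NullMeasurableSet H) (hup : ∀ x, IsUpperSet (fiber η H x)) (hfin : muM f H ≠ ⊤) :
    muM f (ehrhardSymm f η E \ H) ≤ muM f (E \ H) := by
  rw [muM_eq_lintegral_fiberMeasure hη hf ((nullMeasurableSet_ehrhardSymm hη hf hE).diff hH),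
    muM_eq_lintegral_fiberMeasure hη hf (hE.diff hH)]
  have hfiber_fin : ∀ᵐ x : (ℝ ∙ η)ᗮ, fiberMeasure f x η (fiber η H x) < ⊤ :=
    ae_lt_top' (aemeasurable_fiberMeasure_fiber hη hf hH)
      (muM_eq_lintegral_fiberMeasure hη hf hH ▸ hfin)
  refine lintegral_mono_ae ?_
  filter_upwards [hfiber_fin] with x hx
  have : NullSingletonClass (fiberMeasure f x η) := nullSingletonClass_withDensity _
  calc fiberMeasure f x η (fiber η (ehrhardSymm f η E \ H) x)
      = fiberMeasure f x η
          (maxRay (fiberMeasure f x η) (fiberMeasure f x η (fiber η E x)) \ fiber η H x) := by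
        rw [← fiber_ehrhardSymm hη]
        rfl
    _ ≤ fiberMeasure f x η (fiber η E x \ fiber η H x) :=
        measure_maxRay_sdiff_le _ (hup x) hx.ne

end Symmetrization

lemma isUpperSet_fiber_halfSpaceOf {n : ℕ} {f : En n → ℝ} {E : Set (En n)} {v η : En n}
    (hvη : 0 ≤ ⟪v, η⟫) (x : En n) : IsUpperSet (fiber η (halfSpaceOf f E v) x) := by
  intro s t hst hs b hb
  refine (hs b hb).trans ?_
  simp only [inner_add_left, real_inner_smul_left, real_inner_comm v η]
  gcongr

theorem mass_not_increasing_general {n : ℕ} {f : En n → ℝ} (hf : AEMeasurable f)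
    {E : Set (En n)} (hE : NullMeasurableSet E) {v η : En n} (hv : v ≠ 0) (hη : ‖η‖ = 1)
    (hvη : 0 ≤ ⟪v, η⟫) :
    muM f (ehrhardSymm f η E \ halfSpaceOf f E v) ≤ muM f (E \ halfSpaceOf f E v) := by
  by_cases hE_top : muM f E = ⊤
  · simp [halfSpaceOf_eq_univ hE_top]
  · exact muM_ehrhardSymm_sdiff_le hη hf hE measurableSet_halfSpaceOf.nullMeasurableSet
      (isUpperSet_fiber_halfSpaceOf hvη) (ne_top_of_le_ne_top hE_top (muM_halfSpaceOf_le hv))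

/-- Symmetrization in any direction `η` with `v·η > 0` does not move mass out of the
half-space `H_μ(E, v)`. -/
theorem mass_not_increasing {n : ℕ} (hn : 2 ≤ n) (f : En n → ℝ) (f' : En n → En n)
    (hW : MemW f f') (hPS : IsPSMeasure f f')
    (E : Set (En n)) (hE : NullMeasurableSet E volume)
    (v : En n) (hv : ‖v‖ = 1)
    (η : En n) (hη : ‖η‖ = 1) (hvη : (0:ℝ) < ⟪v, η⟫) :
    muM f (ehrhardSymm f η E \ halfSpaceOf f E v) ≤ muM f (E \ halfSpaceOf f E v) := by
  exact mass_not_increasing_general hW.2.1.aestronglyMeasurable.aemeasurable hE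
    (norm_ne_zero_iff.1 (hv ▸ one_ne_zero)) hη hvη.le
end
end

section
/- Let n ≥ 2, let μ = f·Lⁿ ∈ 𝒲(ℝⁿ) be a PS measure, let v ∈ S^{n−1}, and let E ⊆ ℝⁿ be a Lebesgue-measurable set of finite μ-perimeter. Let 𝒮(E) be the collection of all sets F ⊆ ℝⁿ of the form F = S_{η_k} ∘ ⋯ ∘ S_{η_1}(E) for some finite sequence η_1, …, η_k ∈ S^{n−1} with v·η_i > 0 for all i. Then inf_{F ∈ 𝒮(E)} μ(F Δ H_μ(E, v)) = 0. -/
/-!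
Symmetrization preserves the mass of `E`, so for every iterate `F` and the half-space `H` of the
same mass the differences `F \ H` and `H \ F` have equal mass. On each line of direction `η` the
symmetrized set and `H` are nested half-lines. Hence symmetrizing `F` in direction `η` lowers the
mass of `F ∆ H` by at least twice the mass common to `F \ H` and any translate of `H \ F` along
`η`. Averaging this common mass over all translations `s` produces an `s` for which it is bounded
below in terms of the mass of `F ∆ H` alone, since outside a bounded set on which the density is
bounded there is little mass. Such an `s` carries a point outside `H` to a point of `H`, so its
direction is an admissible `η`. The mass of `F ∆ H` can therefore always be lowered by a definite
amount while it stays away from zero, and its infimum is zero.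
-/

open MeasureTheory Set Filter
open scoped ENNReal RealInnerProductSpace Topology

noncomputable section

open scoped symmDiff

/-! ### Half-lines of prescribed mass -/

section UpperTail

variable {α : Type*} [LinearOrder α] [MeasurableSpace α] {m : Measure α} {a : ℝ≥0∞}

/-- The half-line `{t | m [t, ∞) ≤ a}`, which for a finite atomless `m` is the largest half-line
of mass `a`. This form covers the half-lines `∅` and `univ` without extended endpoints. -/
def upperTail (m : Measure α) (a : ℝ≥0∞) : Set α := {t | m (Ici t) ≤ a}

lemma isUpperSet_upperTail : IsUpperSet (upperTail m a) :=
  fun _ _ hst hs => (measure_mono (Ici_subset_Ici.2 hst)).trans hs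

variable [TopologicalSpace α] [OrderTopology α]

lemma measure_Ioi_le_of_forall_gt [DenselyOrdered α] [NoMaxOrder α] [FirstCountableTopology α]
    {t : α} (h : ∀ c, t < c → m (Ici c) ≤ a) : m (Ioi t) ≤ a := by
  obtain ⟨u, hu, htu, hlim⟩ := exists_seq_strictAnti_tendsto t
  have hmono : Monotone fun k => Ici (u k) := fun _ _ hij => Ici_subset_Ici.2 (hu.antitone hij)
  have hcover : Ioi t ⊆ ⋃ k, Ici (u k) := fun x hx =>
    mem_iUnion.2 ((hlim.eventually_le_const hx).exists)
  calc m (Ioi t) ≤ m (⋃ k, Ici (u k)) := measure_mono hcover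
    _ = ⨆ k, m (Ici (u k)) := hmono.measure_iUnion
    _ ≤ a := iSup_le fun k => h _ (htu k)

lemma upperBounds_lowerBounds_upperTail [DenselyOrdered α] [NoMaxOrder α]
    [FirstCountableTopology α] [NullSingletonClass m] :
    upperBounds (lowerBounds (upperTail m a)) = upperTail m a := by
  refine Subset.antisymm (fun t ht => ?_) (subset_upperBounds_lowerBounds _)
  refine (measure_congr Ioi_ae_eq_Ici).ge.trans (measure_Ioi_le_of_forall_gt fun c htc => ?_)
  by_contra hc
  have hlower : c ∈ lowerBounds (upperTail m a) := fun d hd =>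
    (not_le.1 fun hdc => hc (isUpperSet_upperTail hdc hd)).le
  exact htc.not_ge (ht hlower)

variable [BorelSpace α]

lemma measurableSet_upperTail : MeasurableSet (upperTail m a) :=
  isUpperSet_upperTail.ordConnected.measurableSet

variable [IsFiniteMeasure m] [m.InnerRegularCompactLTTop]

lemma measure_upperTail_le : m (upperTail m a) ≤ a := by
  rw [measurableSet_upperTail.measure_eq_iSup_isCompact_of_ne_top (measure_ne_top m _)]
  refine iSup_le fun K => iSup₂_le fun hK hKc => ?_
  obtain rfl | hne := K.eq_empty_or_nonempty
  · simp
  obtain ⟨t, htK, ht⟩ := hKc.exists_isLeast hne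
  exact (measure_mono ht).trans (hK htK)

variable [NullSingletonClass m]

lemma measure_compl_upperTail_le : m (upperTail m a)ᶜ ≤ m univ - a := by
  rw [measurableSet_upperTail.compl.measure_eq_iSup_isCompact_of_ne_top (measure_ne_top m _)]
  refine iSup_le fun K => iSup₂_le fun hK hKc => ?_
  obtain rfl | hne := K.eq_empty_or_nonempty
  · simp
  obtain ⟨t, htK, ht⟩ := hKc.exists_isGreatest hne
  have hat : a ≤ m (Ioi t) := by
    have htail : ¬ m (Ici t) ≤ a := hK htK
    exact (le_of_not_ge htail).trans (measure_congr Ioi_ae_eq_Ici).ge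
  calc m K ≤ m (Ioi t)ᶜ := measure_mono fun x hx => not_lt.2 (ht hx)
    _ = m univ - m (Ioi t) := measure_compl measurableSet_Ioi (measure_ne_top m _)
    _ ≤ m univ - a := tsub_le_tsub_left hat _

lemma measure_upperTail (ha : a ≤ m univ) : m (upperTail m a) = a := by
  refine measure_upperTail_le.antisymm ?_
  have hcompl : m (upperTail m a)ᶜ ≤ m univ - a := measure_compl_upperTail_le
  rw [measure_compl measurableSet_upperTail (measure_ne_top m _)] at hcompl
  exact (ENNReal.sub_le_sub_iff_left ha (measure_ne_top m univ)).1 hcompl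

end UpperTail

lemma measure_symmDiff_add_min_le {α : Type*} [MeasurableSpace α] {m : Measure α}
    [IsFiniteMeasure m] {L F H : Set α} (hL : NullMeasurableSet L m) (hF : NullMeasurableSet F m)
    (hH : NullMeasurableSet H m) (hLF : m L = m F) (hLH : L ⊆ H ∨ H ⊆ L) :
    m (L ∆ H) + 2 * min (m (F \ H)) (m (H \ F)) ≤ m (F ∆ H) := by
  have hF_split : m (F ∩ H) + m (F \ H) = m F := measure_inter_add_sdiff₀ F hH
  have hH_split : m (F ∩ H) + m (H \ F) = m H := by
    rw [inter_comm]; exact measure_inter_add_sdiff₀ H hF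
  have hFH : m (F ∆ H) = m (F \ H) + m (H \ F) :=
    measure_union₀ (hH.diff hF) disjoint_sdiff_sdiff.aedisjoint
  have hcancel : ∀ {x y}, m (F ∩ H) + x = m (F ∩ H) + y → x = y :=
    (ENNReal.add_right_inj (measure_ne_top m _)).1
  rw [hFH, two_mul]
  rcases hLH with hLH | hHL
  · have hgap : m (F \ H) + m (H \ L) = m (H \ F) := hcancel <| by
      rw [← add_assoc, hF_split, hH_split, ← hLF, ← measure_inter_add_sdiff₀ H hL,
        inter_eq_right.2 hLH]
    calc m (L ∆ H) + (min (m (F \ H)) (m (H \ F)) + min (m (F \ H)) (m (H \ F)))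
        ≤ m (H \ L) + (m (F \ H) + m (F \ H)) := by
          rw [symmDiff_of_le hLH]
          gcongr <;> exact min_le_left _ _
      _ = m (F \ H) + m (H \ F) := by rw [← hgap]; ring
  · have hgap : m (H \ F) + m (L \ H) = m (F \ H) := hcancel <| by
      rw [← add_assoc, hH_split, hF_split, ← hLF, ← measure_inter_add_sdiff₀ L hH,
        inter_eq_right.2 hHL]
    calc m (L ∆ H) + (min (m (F \ H)) (m (H \ F)) + min (m (F \ H)) (m (H \ F)))
        ≤ m (L \ H) + (m (H \ F) + m (H \ F)) := by
          rw [symmDiff_of_ge hHL]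
          gcongr <;> exact min_le_right _ _
      _ = m (F \ H) + m (H \ F) := by rw [← hgap]; ring

section Lines

variable {V : Type*} [AddCommGroup V] [Module ℝ V] {ρ : V → ℝ≥0∞} {η z : V} {E : Set V}

/-- The map `(z, t) ↦ z + t • η`, which parametrizes the line of direction `η` through each
`z`. -/
def lineFlow (η : V) (p : V × ℝ) : V := p.1 + p.2 • η

/-- The measure with density `ρ` on the line `{z + t • η}`, in the coordinate `t`. -/
def lineMeasure (ρ : V → ℝ≥0∞) (η z : V) : Measure ℝ :=
  volume.withDensity fun t => ρ (z + t • η)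

/-- The part of `E` on the line `{z + t • η}`, in the coordinate `t`. -/
def lineSection (η z : V) (E : Set V) : Set ℝ := {t | z + t • η ∈ E}

/-- The symmetrization of `E` in direction `η` with respect to the density `ρ`: it meets every line
of direction `η` in the largest half-line having the mass of `E` on that line. Each point `z` is
used as the origin of its own line. -/
def symmetrize (ρ : V → ℝ≥0∞) (η : V) (E : Set V) : Set V :=
  {z | lineMeasure ρ η z (Ici 0) ≤ lineMeasure ρ η z (lineSection η z E)}

instance : NullSingletonClass (lineMeasure ρ η z) where
  measure_singleton t := withDensity_absolutelyContinuous _ _ (measure_singleton t)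

lemma lineMeasure_add_smul (c : ℝ) (B : Set ℝ) :
    lineMeasure ρ η (z + c • η) B = lineMeasure ρ η z ((· - c) ⁻¹' B) := by
  simp only [lineMeasure, withDensity_apply']
  rw [← (measurePreserving_sub_right volume c).setLIntegral_comp_preimage_emb
    (measurableEmbedding_subRight c)]
  refine lintegral_congr fun t => ?_
  rw [add_assoc, ← add_smul, add_sub_cancel]

lemma lineSection_symmetrize : lineSection η z (symmetrize ρ η E) =
    upperTail (lineMeasure ρ η z) (lineMeasure ρ η z (lineSection η z E)) := by
  ext t
  simp only [lineSection, symmetrize, upperTail, mem_ofPred_eq, lineMeasure_add_smul]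
  have htail : (· - t) ⁻¹' Ici (0 : ℝ) = Ici t := by ext u; simp
  have hsection : (· - t) ⁻¹' {u : ℝ | z + t • η + u • η ∈ E} = {u | z + u • η ∈ E} := by
    ext u
    simp only [mem_preimage, mem_ofPred_eq, add_assoc, ← add_smul, add_sub_cancel]
  rw [htail, hsection]

lemma lineMeasure_lineSection_symmetrize [IsFiniteMeasure (lineMeasure ρ η z)] :
    lineMeasure ρ η z (lineSection η z (symmetrize ρ η E)) =
      lineMeasure ρ η z (lineSection η z E) := by
  rw [lineSection_symmetrize]
  exact measure_upperTail (measure_mono (subset_univ _))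

lemma lineMeasure_lineSection (hE : NullMeasurableSet (lineSection η z E)) :
    lineMeasure ρ η z (lineSection η z E) = ∫⁻ t, E.indicator ρ (lineFlow η (z, t)) := by
  rw [lineMeasure, withDensity_apply', ← lintegral_indicator₀ hE]
  rfl

lemma lineMeasure_univ :
    lineMeasure ρ η z univ = ∫⁻ t, ρ (lineFlow η (z, t)) := by
  rw [lineMeasure, withDensity_apply', Measure.restrict_univ]
  rfl

lemma lintegral_min_indicator_le_min_lineMeasure {A B : Set V}
    (hA : NullMeasurableSet (lineSection η z A)) (hB : NullMeasurableSet (lineSection η z B))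
    (σ : ℝ) :
    ∫⁻ t, min (A.indicator ρ (lineFlow η (z, t))) (B.indicator ρ (lineFlow η (z, t) + σ • η)) ≤
      min (lineMeasure ρ η z (lineSection η z A)) (lineMeasure ρ η z (lineSection η z B)) := by
  have hshift : ∀ t, lineFlow η (z, t) + σ • η = lineFlow η (z, t + σ) := fun t => by
    simp only [lineFlow, add_smul, add_assoc]
  rw [lineMeasure_lineSection hA, lineMeasure_lineSection hB,
    ← lintegral_add_right_eq_self (fun t => B.indicator ρ (lineFlow η (z, t))) σ]
  simp only [hshift]
  exact le_min (lintegral_mono fun t => min_le_left _ _) (lintegral_mono fun t => min_le_right _ _)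

lemma lineMeasure_symmetrize_symmDiff_add_le [IsFiniteMeasure (lineMeasure ρ η z)] {F H : Set V}
    (hF : NullMeasurableSet (lineSection η z F)) (hH : NullMeasurableSet (lineSection η z H))
    (hup : IsUpperSet (lineSection η z H)) (σ : ℝ) :
    lineMeasure ρ η z (lineSection η z (symmetrize ρ η F ∆ H)) +
        2 * ∫⁻ t, min ((F \ H).indicator ρ (lineFlow η (z, t)))
          ((H \ F).indicator ρ (lineFlow η (z, t) + σ • η)) ≤
      lineMeasure ρ η z (lineSection η z (F ∆ H)) := by
  have hac : lineMeasure ρ η z ≪ volume := withDensity_absolutelyContinuous _ _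
  have hoverlap := lintegral_min_indicator_le_min_lineMeasure (ρ := ρ) (A := F \ H) (B := H \ F)
    (hF.diff hH) (hH.diff hF) σ
  refine (add_le_add le_rfl (mul_le_mul' le_rfl hoverlap)).trans
    (measure_symmDiff_add_min_le (L := lineSection η z (symmetrize ρ η F)) ?_ (hF.mono_ac hac)
      (hH.mono_ac hac) lineMeasure_lineSection_symmetrize ?_)
  · rw [lineSection_symmetrize]
    exact measurableSet_upperTail.nullMeasurableSet
  · rw [lineSection_symmetrize]
    exact isUpperSet_upperTail.total hup

end Lines

section LineSections

variable {V : Type*} [AddCommGroup V] [Module ℝ V] [MeasurableSpace V] {ρ : V → ℝ≥0∞} {η : V}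
  {E : Set V} {ν τ : Measure V}

lemma ae_nullMeasurableSet_lineSection
    (hτ : Measure.QuasiMeasurePreserving (lineFlow η) (τ.prod volume) ν)
    (hE : NullMeasurableSet E ν) : ∀ᵐ z ∂τ, NullMeasurableSet (lineSection η z E) := by
  obtain ⟨E', -, hE', hEE'⟩ := hE.exists_measurable_subset_ae_eq
  filter_upwards [Measure.ae_ae_of_ae_prod (hτ.preimage_ae_eq hEE')] with z hz
  have hmeas : MeasurableSet (lineSection η z E') :=
    hE'.preimage (hτ.measurable.comp measurable_prodMk_left)
  exact hmeas.nullMeasurableSet.congr hz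

lemma aemeasurable_lintegral_lineFlow [SFinite τ]
    (hτ : Measure.QuasiMeasurePreserving (lineFlow η) (τ.prod volume) ν) {G : V → ℝ≥0∞}
    (hG : AEMeasurable G ν) : AEMeasurable (fun z => ∫⁻ t, G (lineFlow η (z, t))) τ :=
  (hG.comp_quasiMeasurePreserving hτ).lintegral_prod_right'

lemma lintegral_lintegral_lineFlow [SFinite τ]
    (hτ : MeasurePreserving (lineFlow η) (τ.prod volume) ν) {G : V → ℝ≥0∞}
    (hG : AEMeasurable G ν) : ∫⁻ z, (∫⁻ t, G (lineFlow η (z, t))) ∂τ = ∫⁻ x, G x ∂ν := by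
  have hflow := hG.comp_quasiMeasurePreserving hτ.quasiMeasurePreserving
  have hG' : AEMeasurable G ((τ.prod volume).map (lineFlow η)) := by rwa [hτ.map_eq]
  calc ∫⁻ z, (∫⁻ t, G (lineFlow η (z, t))) ∂τ
      = ∫⁻ p, G (lineFlow η p) ∂τ.prod volume := (lintegral_prod _ hflow).symm
    _ = ∫⁻ x, G x ∂ν := by rw [← lintegral_map' hG' hτ.aemeasurable, hτ.map_eq]

lemma aemeasurable_lineMeasure_lineSection [SFinite τ]
    (hτ : Measure.QuasiMeasurePreserving (lineFlow η) (τ.prod volume) ν) (hρ : AEMeasurable ρ ν)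
    (hE : NullMeasurableSet E ν) :
    AEMeasurable (fun z => lineMeasure ρ η z (lineSection η z E)) τ := by
  refine (aemeasurable_lintegral_lineFlow hτ (hρ.indicator₀ hE)).congr ?_
  filter_upwards [ae_nullMeasurableSet_lineSection hτ hE] with z hz
  exact (lineMeasure_lineSection hz).symm

lemma lintegral_lineMeasure_lineSection [SFinite τ]
    (hτ : MeasurePreserving (lineFlow η) (τ.prod volume) ν) (hρ : AEMeasurable ρ ν)
    (hE : NullMeasurableSet E ν) :
    ∫⁻ z, lineMeasure ρ η z (lineSection η z E) ∂τ = ν.withDensity ρ E := by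
  rw [withDensity_apply₀ _ hE, ← lintegral_indicator₀ hE,
    ← lintegral_lintegral_lineFlow hτ (hρ.indicator₀ hE)]
  refine lintegral_congr_ae ?_
  filter_upwards [ae_nullMeasurableSet_lineSection hτ.quasiMeasurePreserving hE] with z hz
  exact lineMeasure_lineSection hz

lemma ae_isFiniteMeasure_lineMeasure [SFinite τ]
    (hτ : MeasurePreserving (lineFlow η) (τ.prod volume) ν) (hρ : AEMeasurable ρ ν)
    (hfin : ∫⁻ x, ρ x ∂ν ≠ ∞) : ∀ᵐ z ∂τ, IsFiniteMeasure (lineMeasure ρ η z) := by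
  rw [← lintegral_lintegral_lineFlow hτ hρ] at hfin
  filter_upwards [ae_lt_top' (aemeasurable_lintegral_lineFlow hτ.quasiMeasurePreserving hρ) hfin]
    with z hz
  exact ⟨by rwa [lineMeasure_univ]⟩

end LineSections

/-! ### Disintegration along parallel lines -/

section Disintegration

variable {V : Type*} [NormedAddCommGroup V] [NormedSpace ℝ V] [FiniteDimensional ℝ V]
  [MeasurableSpace V] [BorelSpace V] {ν : Measure V} [ν.IsAddHaarMeasure] {η : V}

lemma measurable_lineFlow : Measurable (lineFlow η) := by
  unfold lineFlow; fun_prop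

lemma measurePreserving_lineShear :
    MeasurePreserving (fun p : V × ℝ => (lineFlow η p, p.2)) (ν.prod volume) (ν.prod volume) := by
  have hshear : MeasurePreserving (fun p : ℝ × V => (p.1, p.2 + p.1 • η))
      (volume.prod ν) (volume.prod ν) :=
    (MeasurePreserving.id volume).skew_product (by fun_prop)
      (ae_of_all _ fun t => map_add_right_eq_self ν (t • η))
  exact Measure.measurePreserving_swap.comp (hshear.comp Measure.measurePreserving_swap)

lemma quasiMeasurePreserving_lineFlow :
    Measure.QuasiMeasurePreserving (lineFlow η) (ν.prod volume) ν :=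
  Measure.quasiMeasurePreserving_fst.comp measurePreserving_lineShear.quasiMeasurePreserving

/-- Integration over the slab `0 ≤ L x < 1`, where `L η = 1`, replaces integration over a
hyperplane transverse to `η`: each point is reached from the slab for a set of times of
length one. -/
lemma exists_measurePreserving_lineFlow (hη : η ≠ 0) :
    ∃ τ : Measure V, SFinite τ ∧ MeasurePreserving (lineFlow η) (τ.prod volume) ν := by
  obtain ⟨L, hL⟩ := SeparatingDual.exists_eq_one (R := ℝ) hη
  refine ⟨ν.restrict (L ⁻¹' Ico 0 1), inferInstance, measurable_lineFlow, ?_⟩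
  ext s hs
  set B : Set (V × ℝ) := {p | p.1 ∈ s ∧ L p.1 - p.2 ∈ Ico 0 1}
  have hB : MeasurableSet B := (hs.preimage measurable_fst).inter
    (measurableSet_Ico.preimage (by fun_prop))
  have hpre : lineFlow η ⁻¹' s ∩ (L ⁻¹' Ico 0 1) ×ˢ univ =
      (fun p : V × ℝ => (lineFlow η p, p.2)) ⁻¹' B := by
    ext p
    simp [B, lineFlow, hL]
  have hlength : ∀ x, volume (Prod.mk x ⁻¹' B) = s.indicator 1 x := fun x => by
    by_cases hx : x ∈ s
    · have hIoc : Prod.mk x ⁻¹' B = Ioc (L x - 1) (L x) := by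
        ext t
        simp only [B, hx, mem_preimage, mem_ofPred_eq, true_and, mem_Ico, mem_Ioc, sub_nonneg]
        rw [and_comm, sub_lt_comm]
      simp [hIoc, hx]
    · simp [B, hx]
  rw [Measure.map_apply measurable_lineFlow hs, ← Measure.restrict_univ (μ := (volume : Measure ℝ)),
    Measure.prod_restrict, Measure.restrict_apply (measurable_lineFlow hs), hpre,
    measurePreserving_lineShear.measure_preimage hB.nullMeasurableSet, Measure.prod_apply hB]
  simp_rw [hlength]
  rw [lintegral_indicator_one hs]

variable {ρ : V → ℝ≥0∞} {E : Set V}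

lemma nullMeasurableSet_symmetrize (hρ : AEMeasurable ρ ν) (hE : NullMeasurableSet E ν) :
    NullMeasurableSet (symmetrize ρ η E) ν := by
  refine nullMeasurableSet_le ?_ (aemeasurable_lineMeasure_lineSection
    quasiMeasurePreserving_lineFlow hρ hE)
  simp only [lineMeasure, withDensity_apply']
  have hflow : AEMeasurable (ρ ∘ lineFlow η) (ν.prod (volume.restrict (Ici (0 : ℝ)))) :=
    (hρ.comp_quasiMeasurePreserving quasiMeasurePreserving_lineFlow).mono_ac
      (Measure.AbsolutelyContinuous.rfl.prod Measure.restrict_le_self.absolutelyContinuous)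
  exact hflow.lintegral_prod_right'

lemma withDensity_symmetrize (hρ : AEMeasurable ρ ν) (hfin : ∫⁻ x, ρ x ∂ν ≠ ∞) (hη : η ≠ 0)
    (hE : NullMeasurableSet E ν) :
    ν.withDensity ρ (symmetrize ρ η E) = ν.withDensity ρ E := by
  obtain ⟨τ, _, hτ⟩ := exists_measurePreserving_lineFlow (ν := ν) hη
  rw [← lintegral_lineMeasure_lineSection hτ hρ hE,
    ← lintegral_lineMeasure_lineSection hτ hρ (nullMeasurableSet_symmetrize hρ hE)]
  refine lintegral_congr_ae ?_
  filter_upwards [ae_isFiniteMeasure_lineMeasure hτ hρ hfin] with z _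
  exact lineMeasure_lineSection_symmetrize

/-- The mass common to `A` and to the translate of `B` by `-s`, for the density `ρ`. -/
def overlap {V : Type*} [Add V] [MeasurableSpace V] (ν : Measure V) (ρ : V → ℝ≥0∞) (A B : Set V)
    (s : V) : ℝ≥0∞ :=
  ∫⁻ x, min (A.indicator ρ x) (B.indicator ρ (x + s)) ∂ν

lemma withDensity_symmetrize_symmDiff_add_overlap_le {F H : Set V} (hρ : AEMeasurable ρ ν)
    (hfin : ∫⁻ x, ρ x ∂ν ≠ ∞) (hη : η ≠ 0) (hF : NullMeasurableSet F ν)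
    (hH : NullMeasurableSet H ν) (hup : ∀ z, IsUpperSet (lineSection η z H)) (σ : ℝ) :
    ν.withDensity ρ (symmetrize ρ η F ∆ H) + 2 * overlap ν ρ (F \ H) (H \ F) (σ • η) ≤
      ν.withDensity ρ (F ∆ H) := by
  obtain ⟨τ, _, hτ⟩ := exists_measurePreserving_lineFlow (ν := ν) hη
  have hSH := (nullMeasurableSet_symmetrize (η := η) hρ hF).symmDiff hH
  have hoverlap : AEMeasurable
      (fun x => min ((F \ H).indicator ρ x) ((H \ F).indicator ρ (x + σ • η))) ν :=
    (hρ.indicator₀ (hF.diff hH)).min ((hρ.indicator₀ (hH.diff hF)).comp_quasiMeasurePreserving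
      (measurePreserving_add_right ν (σ • η)).quasiMeasurePreserving)
  rw [overlap, ← lintegral_lineMeasure_lineSection hτ hρ hSH,
    ← lintegral_lintegral_lineFlow hτ hoverlap,
    ← lintegral_lineMeasure_lineSection hτ hρ (hF.symmDiff hH),
    ← lintegral_const_mul'' _ (aemeasurable_lintegral_lineFlow hτ.quasiMeasurePreserving hoverlap),
    ← lintegral_add_left' (aemeasurable_lineMeasure_lineSection hτ.quasiMeasurePreserving hρ hSH)]
  refine lintegral_mono_ae ?_
  filter_upwards [ae_isFiniteMeasure_lineMeasure hτ hρ hfin,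
    ae_nullMeasurableSet_lineSection hτ.quasiMeasurePreserving hF,
    ae_nullMeasurableSet_lineSection hτ.quasiMeasurePreserving hH] with z _ hFz hHz
  exact lineMeasure_symmetrize_symmDiff_add_le hFz hHz (hup z) σ

end Disintegration

/-! ### Overlap of translates -/

section Overlap

lemma lintegral_mul_lintegral_le_iSup_mul_measure {G : Type*} [AddGroup G] [MeasurableSpace G]
    [MeasurableAdd₂ G] {ν : Measure G} [SFinite ν] [ν.IsAddLeftInvariant]
    {g h : G → ℝ≥0∞} (hg : AEMeasurable g ν) (hh : AEMeasurable h ν) {S : Set G}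
    (hS : MeasurableSet S) (hsupp : ∀ x s, s ∉ S → g x * h (x + s) = 0) :
    (∫⁻ x, g x ∂ν) * ∫⁻ x, h x ∂ν ≤ (⨆ s, ∫⁻ x, g x * h (x + s) ∂ν) * ν S := by
  have hadd : AEMeasurable (fun p : G × G => h (p.1 + p.2)) (ν.prod ν) :=
    hh.comp_quasiMeasurePreserving <| Measure.quasiMeasurePreserving_snd.comp
      (measurePreserving_prod_add ν ν).quasiMeasurePreserving
  have hprod : AEMeasurable (fun p : G × G => g p.1 * h (p.1 + p.2)) (ν.prod ν) :=
    hg.comp_fst.mul hadd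
  calc (∫⁻ x, g x ∂ν) * ∫⁻ x, h x ∂ν
      = ∫⁻ x, ∫⁻ s, g x * h (x + s) ∂ν ∂ν := by
        rw [← lintegral_mul_const'' _ hg]
        refine lintegral_congr fun x => ?_
        have hhx : AEMeasurable (fun s => h (x + s)) ν := hh.comp_quasiMeasurePreserving
          (measurePreserving_add_left ν x).quasiMeasurePreserving
        rw [lintegral_const_mul'' _ hhx, lintegral_add_left_eq_self h x]
    _ = ∫⁻ s, ∫⁻ x, g x * h (x + s) ∂ν ∂ν := lintegral_lintegral_swap hprod
    _ ≤ ∫⁻ s, S.indicator (fun _ => ⨆ s, ∫⁻ x, g x * h (x + s) ∂ν) s ∂ν := by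
        refine lintegral_mono fun s => ?_
        by_cases hs : s ∈ S
        · rw [indicator_of_mem hs]
          exact le_iSup (fun s => ∫⁻ x, g x * h (x + s) ∂ν) s
        · simp [hsupp _ s hs]
    _ = (⨆ s, ∫⁻ x, g x * h (x + s) ∂ν) * ν S := lintegral_indicator_const hS _

lemma exists_measure_natCast_lt_lt {α : Type*} [MeasurableSpace α] {m : Measure α}
    [IsFiniteMeasure m] {φ : α → ℝ≥0∞} (hφ : AEMeasurable φ m) (hfin : ∀ᵐ x ∂m, φ x ≠ ∞)
    {ε : ℝ≥0∞} (hε : ε ≠ 0) : ∃ N : ℕ, m {x | N < φ x} < ε := by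
  have hanti : Antitone fun N : ℕ => {x | (N : ℝ≥0∞) < φ x} := fun i j hij x hx =>
    lt_of_le_of_lt (Nat.cast_le.2 hij) (mem_ofPred_eq.mp hx)
  have hlim := tendsto_measure_iInter_atTop (μ := m)
    (fun N => nullMeasurableSet_lt aemeasurable_const hφ) hanti ⟨0, measure_ne_top m _⟩
  have hnull : m (⋂ N : ℕ, {x | (N : ℝ≥0∞) < φ x}) = 0 := by
    refine measure_mono_null (t := {x | ¬ φ x ≠ ∞}) (fun x hx hx' => ?_) (ae_iff.1 hfin)
    obtain ⟨N, hN⟩ := ENNReal.exists_nat_gt hx'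
    exact lt_asymm hN (mem_iInter.1 hx N)
  rw [hnull] at hlim
  exact (hlim.eventually (gt_mem_nhds (pos_iff_ne_zero.2 hε))).exists

lemma exists_natCast_le_half_le_measure_inter {α : Type*} [MeasurableSpace α] {m : Measure α}
    [IsFiniteMeasure m] {φ : α → ℝ≥0∞} (hφ : AEMeasurable φ m) (hfin : ∀ᵐ x ∂m, φ x ≠ ∞)
    {ε : ℝ≥0∞} (hε : ε ≠ 0) (hε' : ε ≠ ∞) :
    ∃ N : ℕ, ∀ A, ε ≤ m A → ε / 2 ≤ m (A ∩ {x | φ x ≤ N}) := by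
  obtain ⟨N, hN⟩ := exists_measure_natCast_lt_lt hφ hfin (ENNReal.half_pos hε).ne'
  refine ⟨N, fun A hA => ?_⟩
  have hsplit : ε / 2 + ε / 2 ≤ m (A ∩ {x | φ x ≤ N}) + ε / 2 := calc
    ε / 2 + ε / 2 = ε := ENNReal.add_halves ε
    _ ≤ m A := hA
    _ ≤ m (A ∩ {x | φ x ≤ N}) + m (A \ {x | φ x ≤ N}) := measure_le_inter_add_sdiff _ _ _
    _ ≤ m (A ∩ {x | φ x ≤ N}) + ε / 2 := by
      gcongr
      exact (measure_mono fun x hx => not_le.1 (notMem_ofPred_iff.1 hx.2)).trans hN.le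
  exact (ENNReal.add_le_add_iff_right (ENNReal.div_ne_top hε' two_ne_zero)).1 hsplit

lemma indicator_inter_mul_indicator_inter_le {α : Type*} {ρ : α → ℝ≥0∞} {N : ℝ≥0∞} {A B K : Set α}
    (hK : ∀ x ∈ K, ρ x ≤ N) (x y : α) : (A ∩ K).indicator ρ x * (B ∩ K).indicator ρ y ≤
      N * min (A.indicator ρ x) (B.indicator ρ y) := by
  by_cases hx : x ∈ A ∩ K
  · by_cases hy : y ∈ B ∩ K
    · rw [indicator_of_mem hx, indicator_of_mem hy, indicator_of_mem hx.1, indicator_of_mem hy.1,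
        ← max_mul_min]
      exact mul_le_mul' (max_le (hK x hx.2) (hK y hy.2)) le_rfl
    · simp [indicator_of_notMem hy]
  · simp [indicator_of_notMem hx]

variable {V : Type*} [NormedAddCommGroup V] [ProperSpace V] [MeasurableSpace V] [BorelSpace V]
  {ν : Measure V} [ν.IsAddHaarMeasure] {ρ : V → ℝ≥0∞}

/-- The integrals `∫ g(x) h(x + s) dx` of the densities `g`, `h` of the two restrictions to `K` are
at most `N` times the overlap, and their integral over `s` is the product of the two masses. -/
lemma withDensity_inter_mul_withDensity_inter_le (hρ : AEMeasurable ρ ν) {A B K : Set V}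
    (hA : NullMeasurableSet A ν) (hB : NullMeasurableSet B ν) (hK : NullMeasurableSet K ν)
    {N : ℝ≥0∞} (hN : N ≠ ∞) (hρN : ∀ x ∈ K, ρ x ≤ N) {R : ℝ} (hR : ∀ x ∈ K, ‖x‖ ≤ R) :
    ν.withDensity ρ (A ∩ K) * ν.withDensity ρ (B ∩ K) ≤
      (⨆ s, overlap ν ρ A B s) * (N * ν (Metric.closedBall 0 (R + R))) := by
  have hsupp : ∀ x s, s ∉ Metric.closedBall 0 (R + R) →
      (A ∩ K).indicator ρ x * (B ∩ K).indicator ρ (x + s) = 0 := fun x s hs => by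
    contrapose! hs
    have hx : x ∈ A ∩ K := mem_of_indicator_ne_zero (left_ne_zero_of_mul hs)
    have hxs : x + s ∈ B ∩ K := mem_of_indicator_ne_zero (right_ne_zero_of_mul hs)
    rw [mem_closedBall_zero_iff, ← add_sub_cancel_left x s]
    exact norm_sub_le_of_le (hR _ hxs.2) (hR _ hx.2)
  rw [withDensity_apply₀ _ (hA.inter hK), withDensity_apply₀ _ (hB.inter hK),
    ← lintegral_indicator₀ (hA.inter hK), ← lintegral_indicator₀ (hB.inter hK)]
  calc (∫⁻ x, (A ∩ K).indicator ρ x ∂ν) * ∫⁻ x, (B ∩ K).indicator ρ x ∂ν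
      ≤ (⨆ s, ∫⁻ x, (A ∩ K).indicator ρ x * (B ∩ K).indicator ρ (x + s) ∂ν) *
          ν (Metric.closedBall 0 (R + R)) :=
        lintegral_mul_lintegral_le_iSup_mul_measure (hρ.indicator₀ (hA.inter hK))
          (hρ.indicator₀ (hB.inter hK)) measurableSet_closedBall hsupp
    _ ≤ (⨆ s, N * overlap ν ρ A B s) * ν (Metric.closedBall 0 (R + R)) := by
        gcongr with s
        rw [overlap, ← lintegral_const_mul' _ _ hN]
        exact lintegral_mono fun x => indicator_inter_mul_indicator_inter_le hρN _ _
    _ = (⨆ s, overlap ν ρ A B s) * (N * ν (Metric.closedBall 0 (R + R))) := by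
        rw [← ENNReal.mul_iSup]; ring

lemma exists_le_iSup_overlap (hρ : AEMeasurable ρ ν) (hfin : ∫⁻ x, ρ x ∂ν ≠ ∞) {ε : ℝ≥0∞}
    (hε : ε ≠ 0) (hε' : ε ≠ ∞) : ∃ κ ≠ 0, ∀ A B : Set V, NullMeasurableSet A ν →
      NullMeasurableSet B ν → ε ≤ ν.withDensity ρ A → ε ≤ ν.withDensity ρ B →
        κ ≤ ⨆ s, overlap ν ρ A B s := by
  have : IsFiniteMeasure (ν.withDensity ρ) := isFiniteMeasure_withDensity hfin
  have hac : ν.withDensity ρ ≪ ν := withDensity_absolutelyContinuous _ _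
  have hφ : AEMeasurable (fun x => max (ENNReal.ofReal ‖x‖) (ρ x)) ν := by fun_prop
  have hφfin : ∀ᵐ x ∂ν, max (ENNReal.ofReal ‖x‖) (ρ x) ≠ ∞ := by
    filter_upwards [ae_lt_top' hρ hfin] with x hx
    exact (max_lt ENNReal.ofReal_lt_top hx).ne
  obtain ⟨N, hN⟩ := exists_natCast_le_half_le_measure_inter (hφ.mono_ac hac) (hac hφfin) hε hε'
  have hK : NullMeasurableSet {x : V | max (ENNReal.ofReal ‖x‖) (ρ x) ≤ N} ν :=
    nullMeasurableSet_le hφ aemeasurable_const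
  have hdenom : N * ν (Metric.closedBall 0 (N + N)) ≠ ∞ :=
    ENNReal.mul_ne_top (ENNReal.natCast_ne_top N) measure_closedBall_lt_top.ne
  refine ⟨ε / 2 * (ε / 2) / (N * ν (Metric.closedBall 0 (N + N))),
    (ENNReal.div_pos (by simpa using hε) hdenom).ne', fun A B hA hB hεA hεB => ?_⟩
  refine ENNReal.div_le_of_le_mul ((mul_le_mul' (hN A hεA) (hN B hεB)).trans ?_)
  exact withDensity_inter_mul_withDensity_inter_le hρ hA hB hK (ENNReal.natCast_ne_top N)
    (fun x hx => (le_max_right _ _).trans hx)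
    (fun x hx => ENNReal.ofReal_le_natCast.1 ((le_max_left _ _).trans hx))

end Overlap

/-! ### Convergence to a half-space -/

lemma iInf_eq_zero_of_forall_exists_add_le {α : Type*} {S : Set α} {d : α → ℝ≥0∞} {x₀ : α}
    (hx₀ : x₀ ∈ S) (hd : d x₀ ≠ ∞)
    (hdec : ∀ δ ≠ 0, δ ≠ ∞ → ∃ κ ≠ 0, ∀ x ∈ S, δ ≤ d x → ∃ y ∈ S, d y + κ ≤ d x) :
    ⨅ x ∈ S, d x = 0 := by
  by_contra hpos
  have hfin : ⨅ x ∈ S, d x ≠ ∞ := ne_top_of_le_ne_top hd (iInf₂_le x₀ hx₀)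
  obtain ⟨κ, hκ, hstep⟩ := hdec _ hpos hfin
  obtain ⟨x, hx, hxκ⟩ : ∃ x ∈ S, d x < (⨅ x ∈ S, d x) + κ := by
    simpa only [iInf_lt_iff, exists_prop] using ENNReal.lt_add_right hfin hκ
  obtain ⟨y, hy, hyx⟩ := hstep x hx (iInf₂_le x hx)
  exact (lt_of_add_lt_add_right (hyx.trans_lt hxκ)).not_ge (iInf₂_le y hy)

section HalfSpace

variable {V : Type*} [NormedAddCommGroup V] [NormedSpace ℝ V] {ℓ : StrongDual ℝ V} {U : Set ℝ}

lemma exists_norm_eq_one_smul_eq {s : V} (hs : 0 < ℓ s) :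
    ∃ η, ‖η‖ = 1 ∧ 0 < ℓ η ∧ ‖s‖ • η = s := by
  have hs0 : s ≠ 0 := fun h => by simp [h] at hs
  have hnorm : 0 < ‖s‖ := norm_pos_iff.2 hs0
  exact ⟨‖s‖⁻¹ • s, norm_smul_inv_norm hs0, by simpa using mul_pos (inv_pos.2 hnorm) hs,
    smul_inv_smul₀ hnorm.ne' s⟩

lemma isUpperSet_lineSection_preimage {η : V} (hU : IsUpperSet U) (hη : 0 ≤ ℓ η) (z : V) :
    IsUpperSet (lineSection η z (ℓ ⁻¹' U)) := fun t u htu ht => by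
  refine hU ?_ ht
  simp only [map_add, map_smul, smul_eq_mul]
  gcongr

/-- The sets obtained from `E` by finitely many symmetrizations, at least one, in unit directions
`η` with `0 < ℓ η`; the first direction of the list is applied first. -/
def iteratedSymmetrizations (ρ : V → ℝ≥0∞) (ℓ : StrongDual ℝ V) (E : Set V) : Set (Set V) :=
  {F | ∃ l : List V, l ≠ [] ∧ (∀ η ∈ l, ‖η‖ = 1 ∧ 0 < ℓ η) ∧
    F = l.foldl (fun A η => symmetrize ρ η A) E}

variable {ρ : V → ℝ≥0∞} {E F : Set V}

lemma iteratedSymmetrizations_nonempty (hℓ : ℓ ≠ 0) : (iteratedSymmetrizations ρ ℓ E).Nonempty := by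
  obtain ⟨s, hs⟩ : ∃ s, 0 < ℓ s := by
    obtain ⟨s, hs⟩ := DFunLike.exists_ne hℓ
    obtain hs | hs := lt_or_gt_of_ne hs
    · exact ⟨-s, by simpa using hs⟩
    · exact ⟨s, hs⟩
  obtain ⟨η, hη, hℓη, -⟩ := exists_norm_eq_one_smul_eq hs
  exact ⟨symmetrize ρ η E, [η], by simp [hη, hℓη]⟩

lemma symmetrize_mem_iteratedSymmetrizations (hF : F ∈ iteratedSymmetrizations ρ ℓ E) {η : V}
    (hη : ‖η‖ = 1 ∧ 0 < ℓ η) : symmetrize ρ η F ∈ iteratedSymmetrizations ρ ℓ E := by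
  obtain ⟨l, -, hl, rfl⟩ := hF
  exact ⟨l ++ [η], by simp, List.forall_mem_append.2 ⟨hl, by simpa using hη⟩, by simp⟩

variable [MeasurableSpace V] {ν : Measure V}

lemma pos_of_overlap_ne_zero (hU : IsUpperSet U) {s : V}
    (hs : overlap ν ρ (F \ ℓ ⁻¹' U) (ℓ ⁻¹' U \ F) s ≠ 0) : 0 < ℓ s := by
  by_contra! hℓs
  refine hs (lintegral_eq_zero_of_ae_eq_zero (ae_of_all _ fun x => ?_))
  by_contra hx
  obtain ⟨hxF, hxs⟩ := lt_min_iff.1 (pos_iff_ne_zero.2 hx)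
  have hxF' : x ∈ F \ ℓ ⁻¹' U := mem_of_indicator_ne_zero hxF.ne'
  have hxs' : x + s ∈ ℓ ⁻¹' U \ F := mem_of_indicator_ne_zero hxs.ne'
  exact hxF'.2 (hU (by simpa using hℓs) hxs'.1)

variable [FiniteDimensional ℝ V] [BorelSpace V] [ν.IsAddHaarMeasure]

lemma exists_symmetrize_symmDiff_add_le (hρ : AEMeasurable ρ ν) (hfin : ∫⁻ x, ρ x ∂ν ≠ ∞)
    (hU : IsUpperSet U) {δ : ℝ≥0∞} (hδ : δ ≠ 0) (hδ' : δ ≠ ∞) :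
    ∃ κ ≠ 0, ∀ F, NullMeasurableSet F ν →
      ν.withDensity ρ F = ν.withDensity ρ (ℓ ⁻¹' U) → δ ≤ ν.withDensity ρ (F ∆ (ℓ ⁻¹' U)) →
        ∃ η, (‖η‖ = 1 ∧ 0 < ℓ η) ∧
          ν.withDensity ρ (symmetrize ρ η F ∆ (ℓ ⁻¹' U)) + κ ≤
            ν.withDensity ρ (F ∆ (ℓ ⁻¹' U)) := by
  have : IsFiniteMeasure (ν.withDensity ρ) := isFiniteMeasure_withDensity hfin
  have hac : ν.withDensity ρ ≪ ν := withDensity_absolutelyContinuous _ _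
  have hH : MeasurableSet (ℓ ⁻¹' U) := ℓ.continuous.measurable hU.ordConnected.measurableSet
  obtain ⟨κ₀, hκ₀, hoverlap⟩ := exists_le_iSup_overlap hρ hfin (ENNReal.half_pos hδ).ne'
    (ENNReal.div_ne_top hδ' two_ne_zero)
  obtain ⟨κ, hκ, hκκ₀⟩ := exists_between (pos_iff_ne_zero.2 hκ₀)
  refine ⟨2 * κ, mul_ne_zero two_ne_zero hκ.ne', fun F hF hFH hδF => ?_⟩
  have hsdiff : ν.withDensity ρ (F \ ℓ ⁻¹' U) = ν.withDensity ρ (ℓ ⁻¹' U \ F) :=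
    measure_sdiff_symm (hF.mono_ac hac) hH.nullMeasurableSet hFH (measure_ne_top _ _)
  have hhalf : δ / 2 ≤ ν.withDensity ρ (F \ ℓ ⁻¹' U) := by
    refine ENNReal.div_le_of_le_mul' (hδF.trans ?_)
    rw [two_mul]
    nth_rw 2 [hsdiff]
    exact measure_union_le _ _
  obtain ⟨s, hs⟩ := lt_iSup_iff.1 <| hκκ₀.trans_le <| hoverlap (F \ ℓ ⁻¹' U) (ℓ ⁻¹' U \ F)
    (hF.diff hH.nullMeasurableSet) (hH.nullMeasurableSet.diff hF) hhalf (hsdiff ▸ hhalf)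
  obtain ⟨η, hη, hℓη, hηs⟩ := exists_norm_eq_one_smul_eq (pos_of_overlap_ne_zero hU hs.ne_bot)
  refine ⟨η, ⟨hη, hℓη⟩, le_trans ?_ (withDensity_symmetrize_symmDiff_add_overlap_le hρ hfin
    (norm_ne_zero_iff.1 (hη ▸ one_ne_zero)) hF hH.nullMeasurableSet
    (isUpperSet_lineSection_preimage hU hℓη.le) ‖s‖)⟩
  rw [hηs]
  gcongr

lemma nullMeasurableSet_and_withDensity_eq_of_mem_iteratedSymmetrizations (hρ : AEMeasurable ρ ν)
    (hfin : ∫⁻ x, ρ x ∂ν ≠ ∞) (hE : NullMeasurableSet E ν)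
    (hF : F ∈ iteratedSymmetrizations ρ ℓ E) :
    NullMeasurableSet F ν ∧ ν.withDensity ρ F = ν.withDensity ρ E := by
  obtain ⟨l, -, hl, rfl⟩ := hF
  refine List.foldlRecOn (motive := fun A => NullMeasurableSet A ν ∧
    ν.withDensity ρ A = ν.withDensity ρ E) l _ ⟨hE, rfl⟩ fun A ⟨hA, hAE⟩ η hηl => ?_
  have hη : η ≠ 0 := norm_ne_zero_iff.1 ((hl η hηl).1 ▸ one_ne_zero)
  exact ⟨nullMeasurableSet_symmetrize hρ hA, (withDensity_symmetrize hρ hfin hη hA).trans hAE⟩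

lemma nullSingletonClass_map_withDensity (hℓ : ℓ ≠ 0) :
    NullSingletonClass ((ν.withDensity ρ).map ℓ) where
  measure_singleton c := by
    rw [Measure.map_apply ℓ.continuous.measurable (measurableSet_singleton c)]
    refine withDensity_absolutelyContinuous ν ρ (measure_eq_zero_iff_ae_notMem.2 ?_)
    have hsurj : Function.Surjective (ℓ : V →ₗ[ℝ] ℝ) := LinearMap.surjective (by exact_mod_cast hℓ)
    exact (ae_comp_linearMap_mem_iff _ ν volume hsurj (measurableSet_singleton c).compl).2
      (measure_eq_zero_iff_ae_notMem.1 (measure_singleton c))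

lemma withDensity_preimage_upperTail (hfin : ∫⁻ x, ρ x ∂ν ≠ ∞) (hℓ : ℓ ≠ 0) {a : ℝ≥0∞}
    (ha : a ≤ ν.withDensity ρ univ) :
    ν.withDensity ρ (ℓ ⁻¹' upperTail ((ν.withDensity ρ).map ℓ) a) = a := by
  have : IsFiniteMeasure (ν.withDensity ρ) := isFiniteMeasure_withDensity hfin
  have := nullSingletonClass_map_withDensity (ν := ν) (ρ := ρ) hℓ
  have hmeas : Measurable ℓ := ℓ.continuous.measurable
  rw [← Measure.map_apply hmeas measurableSet_upperTail, measure_upperTail]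
  rwa [Measure.map_apply hmeas .univ]

theorem filling_all_the_holes_general (hρ : AEMeasurable ρ ν) (hfin : ∫⁻ x, ρ x ∂ν ≠ ∞)
    (hℓ : ℓ ≠ 0) (hE : NullMeasurableSet E ν) :
    ⨅ F ∈ iteratedSymmetrizations ρ ℓ E, ν.withDensity ρ
      (F ∆ (ℓ ⁻¹' upperTail ((ν.withDensity ρ).map ℓ) (ν.withDensity ρ E))) = 0 := by
  have : IsFiniteMeasure (ν.withDensity ρ) := isFiniteMeasure_withDensity hfin
  obtain ⟨F₀, hF₀⟩ := iteratedSymmetrizations_nonempty (ρ := ρ) (E := E) hℓ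
  refine iInf_eq_zero_of_forall_exists_add_le hF₀ (measure_ne_top _ _) fun δ hδ hδ' => ?_
  obtain ⟨κ, hκ, hdecrease⟩ := exists_symmetrize_symmDiff_add_le (ℓ := ℓ) hρ hfin
    (isUpperSet_upperTail (m := (ν.withDensity ρ).map ℓ) (a := ν.withDensity ρ E)) hδ hδ'
  refine ⟨κ, hκ, fun F hF hδF => ?_⟩
  obtain ⟨hFmeas, hFE⟩ :=
    nullMeasurableSet_and_withDensity_eq_of_mem_iteratedSymmetrizations hρ hfin hE hF
  have hmass := hFE.trans
    (withDensity_preimage_upperTail hfin hℓ (measure_mono (subset_univ _))).symm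
  obtain ⟨η, hη, hηκ⟩ := hdecrease F hFmeas hmass hδF
  exact ⟨_, symmetrize_mem_iteratedSymmetrizations hF hη, hηκ⟩

end HalfSpace

/-! ### Half-spaces of Euclidean space -/

section Euclidean

lemma ehrhard1D_one {m : Measure ℝ} [NullSingletonClass m] {A : Set ℝ} :
    ehrhard1D m 1 A = upperTail m (m A) := by
  simp only [ehrhard1D, one_mul]
  exact upperBounds_lowerBounds_upperTail

variable {n : ℕ} {f : En n → ℝ} {η v : En n} {E : Set (En n)}

lemma ehrhardSymm_eq_symmetrize :
    ehrhardSymm f η E = symmetrize (fun x => ENNReal.ofReal (f x)) η E := by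
  ext z
  set ρ : En n → ℝ≥0∞ := fun x => ENNReal.ofReal (f x)
  set p := z - ⟪z, η⟫ • η
  have hz : p + ⟪z, η⟫ • η = z := sub_add_cancel z _
  calc z ∈ ehrhardSymm f η E
      ↔ ⟪z, η⟫ ∈ ehrhard1D (lineMeasure ρ η p) 1 (lineSection η p E) := Iff.rfl
    _ ↔ ⟪z, η⟫ ∈ lineSection η p (symmetrize ρ η E) := by
      rw [ehrhard1D_one, lineSection_symmetrize]
    _ ↔ z ∈ symmetrize ρ η E := by rw [lineSection, mem_ofPred_eq, hz]

lemma innerSL_ne_zero (hv : v ≠ 0) : innerSL ℝ v ≠ 0 :=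
  norm_ne_zero_iff.1 (by rwa [innerSL_apply_norm, norm_ne_zero_iff])

lemma halfSpaceOf_eq_preimage_upperTail (hv : v ≠ 0) :
    halfSpaceOf f E v =
      innerSL ℝ v ⁻¹' upperTail ((muM f).map (innerSL ℝ v)) (muM f E) := by
  have : NullSingletonClass ((muM f).map (innerSL ℝ v)) :=
    nullSingletonClass_map_withDensity (innerSL_ne_zero hv)
  rw [← upperBounds_lowerBounds_upperTail]
  ext x
  simp only [halfSpaceOf, halfSpace, upperTail, real_inner_comm v,
    Measure.map_apply (innerSL ℝ v).continuous.measurable measurableSet_Ici]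
  rfl

lemma mem_iteratedSymmetrizations_innerSL {F : Set (En n)} :
    F ∈ iteratedSymmetrizations (fun x => ENNReal.ofReal (f x)) (innerSL ℝ v) E ↔
      ∃ l : List (En n), l ≠ [] ∧ (∀ η ∈ l, ‖η‖ = 1 ∧ (0 : ℝ) < ⟪v, η⟫) ∧
        F = l.foldl (fun A η => ehrhardSymm f η A) E := by
  simp only [iteratedSymmetrizations, mem_ofPred_eq, innerSL_apply_apply, ehrhardSymm_eq_symmetrize]

end Euclidean

/-- **Filling all the holes.** For a PS measure and a set `E` of finite `μ`-perimeter,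
iterated Ehrhard symmetrizations in directions making positive angle with `v` bring `E`
arbitrarily close (in `μ`-symmetric-difference) to the half-space `H_μ(E, v)`. -/
theorem filling_all_the_holes {n : ℕ} (hn : 2 ≤ n) (f : En n → ℝ) (f' : En n → En n)
    (hW : MemW f f') (hPS : IsPSMeasure f f')
    (v : En n) (hv : ‖v‖ = 1)
    (E : Set (En n)) (hE : NullMeasurableSet E volume)
    (hfin : perim f f' univ E < ⊤) :
    (⨅ (F : Set (En n)) (_ : ∃ l : List (En n), l ≠ [] ∧
        (∀ η ∈ l, ‖η‖ = 1 ∧ (0:ℝ) < ⟪v, η⟫) ∧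
        F = l.foldl (fun A η => ehrhardSymm f η A) E),
      muM f ((F \ halfSpaceOf f E v) ∪ (halfSpaceOf f E v \ F))) = 0 := by
  have hv0 : v ≠ 0 := norm_ne_zero_iff.1 (hv ▸ one_ne_zero)
  simp only [← mem_iteratedSymmetrizations_innerSL, halfSpaceOf_eq_preimage_upperTail hv0]
  exact filling_all_the_holes_general hW.2.1.aemeasurable.ennreal_ofReal
    hW.2.1.lintegral_lt_top.ne (innerSL_ne_zero hv0) hE

end
end
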